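/- arXiv:1902.06591 — 5 statements merged into one kernel-verified Lean document; each statement's English description precedes it below -/
import Mathlib

section
/- Canonical decomposition (uniqueness): if a viable sequence η ∈ D_ε* of non-shift transitions admits two decompositions η = η₋·η₊ = η̂₋·η̂₊ where each of η₋, η̂₋ nulls some configuration (there exists σ ∈ S* with σ →_{η₋} ε, and likewise for η̂₋) and each of η₊, η̂₊ maps some single-state configuration to a nonempty configuration (there exist s ∈ S and σ' ∈ S⁺ with s →_{η₊} σ', and likewise for η̂₊), then η₋ = η̂₋ and η₊ = η̂₊. -/
/-! The change of length caused by a sequence of transitions does not depend on the configuration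
it is applied to (`reach_length`), and only the empty sequence applies to `ε` (`reach_from_nil`).
If one reductive part were a proper prefix of the other, the segment `ζ ≠ []` between the two cut
points would null a nonempty configuration, hence shorten configurations by at least one. The longer
nonreductive part, which starts from a single state and begins with `ζ`, would then be at `ε`
after `ζ`, and could only end at `ε`, contradicting that it ends at a nonempty configuration. -/

/-- Transitions of a recursive transition network over states `S`,
terminal alphabet `A`, and production labels `P`. -/
inductive Tr (S A P : Type) : Type where
  | shift (s : S) (a : A) (t : S)
  | call (s u t : S)
  | reduce (s : S) (p : P)

variable {S A P : Type}

/-- A transition is a shift transition. -/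
def Tr.isShift : Tr S A P → Prop
  | .shift _ _ _ => True
  | _ => False

/-- One-step reachability induced by a single transition on configurations (words over `S`). -/
inductive Step : Tr S A P → List S → List S → Prop where
  | shift (s : S) (a : A) (t : S) (σ : List S) :
      Step (Tr.shift s a t) (s :: σ) (t :: σ)
  | call (s u t : S) (σ : List S) :
      Step (Tr.call s u t) (s :: σ) (u :: t :: σ)
  | reduce (s : S) (p : P) (σ : List S) :
      Step (Tr.reduce s p) (s :: σ) σ

/-- Reachability along a sequence of transitions, all belonging to `D`. -/
inductive Reach (D : Set (Tr S A P)) : List (Tr S A P) → List S → List S → Prop where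
  | nil (σ : List S) : Reach D [] σ σ
  | cons {d : Tr S A P} {δ : List (Tr S A P)} {σ σ' σ'' : List S} :
      d ∈ D → Step d σ σ' → Reach D δ σ' σ'' → Reach D (d :: δ) σ σ''

/-- `η` consists of non-shift transitions (membership in `D` is enforced by `Reach`). -/
def EpsSeq (η : List (Tr S A P)) : Prop := ∀ d ∈ η, ¬ d.isShift

/-- The length change along `δ`, in subtraction-free form, is the same for any two runs of `δ`. -/
theorem reach_length {D : Set (Tr S A P)} {δ : List (Tr S A P)} {σ σ' τ τ' : List S}
    (h : Reach D δ σ σ') (k : Reach D δ τ τ') :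
    σ'.length + τ.length = σ.length + τ'.length := by
  induction h generalizing τ τ' with
  | nil σ => cases k; rfl
  | cons hd hs _ ih =>
    cases k with
    | cons _ ks kr =>
      have := ih kr
      cases hs <;> cases ks <;> simp only [List.length_cons] at * <;> omega

theorem reach_from_nil {D : Set (Tr S A P)} {δ : List (Tr S A P)} {σ : List S}
    (h : Reach D δ [] σ) : δ = [] ∧ σ = [] := by
  cases h with
  | nil => exact ⟨rfl, rfl⟩
  | cons _ hs _ => cases hs

theorem reach_split {D : Set (Tr S A P)} {δ ζ : List (Tr S A P)} {σ σ' : List S}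
    (h : Reach D (δ ++ ζ) σ σ') : ∃ τ, Reach D δ σ τ ∧ Reach D ζ τ σ' := by
  induction δ generalizing σ with
  | nil => exact ⟨σ, .nil σ, h⟩
  | cons d δ ih =>
    cases h with
    | cons hd hs hr =>
      obtain ⟨τ, h₁, h₂⟩ := ih hr
      exact ⟨τ, .cons hd hs h₁, h₂⟩

/-- The segment `ζ` between two cut points of the same sequence is empty: the left factor `δ ++ ζ`
nulls a configuration, while `ζ ++ θ` takes a single state to a nonempty configuration. -/
theorem segment_eq_nil {D : Set (Tr S A P)} {δ ζ θ : List (Tr S A P)}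
    (hm : ∃ σm : List S, Reach D (δ ++ ζ) σm [])
    (hp : ∃ (sp : S) (σp : List S), σp ≠ [] ∧ Reach D (ζ ++ θ) [sp] σp) : ζ = [] := by
  obtain ⟨σm, hm⟩ := hm
  obtain ⟨sp, σp, hne, hp⟩ := hp
  obtain ⟨τ, -, hτ⟩ := reach_split hm
  obtain ⟨ρ, hρ, hθ⟩ := reach_split hp
  have hlen := reach_length hτ hρ
  cases τ with
  | nil => exact (reach_from_nil hτ).1
  | cons s τ =>
    -- `ζ` removes at least one state, so it takes `[sp]` to `ε`
    have hρ0 : ρ = [] := by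
      apply List.eq_nil_of_length_eq_zero
      simp only [List.length_cons, List.length_nil] at hlen
      omega
    subst hρ0
    exact absurd (reach_from_nil hθ).2 hne

/-- **Canonical decomposition (uniqueness).**
If a viable sequence `η ∈ D_ε*` of non-shift transitions admits two decompositions
into a reductive part (nulling some configuration) followed by a nonreductive part
(mapping some single state to a nonempty configuration), these decompositions coincide. -/
theorem canonical_decomposition_uniqueness
    (S A P : Type) (D : Set (Tr S A P))
    (η ηm ηp ηm' ηp' : List (Tr S A P))
    (hε : EpsSeq η)
    (hviable : ∃ σ σ' : List S, Reach D η σ σ')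
    (h1 : η = ηm ++ ηp) (h2 : η = ηm' ++ ηp')
    (hm : ∃ σm : List S, Reach D ηm σm [])
    (hp : ∃ (sp : S) (σp : List S), σp ≠ [] ∧ Reach D ηp [sp] σp)
    (hm' : ∃ σm : List S, Reach D ηm' σm [])
    (hp' : ∃ (sp : S) (σp : List S), σp ≠ [] ∧ Reach D ηp' [sp] σp) :
    ηm = ηm' ∧ ηp = ηp' := by
  subst h1
  rcases List.append_eq_append_iff.mp h2 with ⟨ζ, rfl, rfl⟩ | ⟨ζ, rfl, rfl⟩
  · obtain rfl := segment_eq_nil hm' hp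
    simp
  · obtain rfl := segment_eq_nil hm hp'
    simp
end

section
/- For every call-reduce-closed language Σ ⊆ S* and every terminal a ∈ A, the shift of the null closure is contained in the null closure of the shift: S_a(N(Σ)) ⊆ N(S_a(Σ)). -/
variable {S A P : Type}

/-- A state is nullable if it reaches the empty configuration by non-shift transitions. -/
def Nullable (D : Set (Tr S A P)) (s : S) : Prop :=
  ∃ η : List (Tr S A P), EpsSeq η ∧ Reach D η [s] []

/-- Call-reduce closure of a language of configurations. -/
def CRC (D : Set (Tr S A P)) (L : Set (List S)) : Set (List S) :=
  {σ' | ∃ (η : List (Tr S A P)) (σ : List S), EpsSeq η ∧ σ ∈ L ∧ Reach D η σ σ'}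

/-- Shift of a language of configurations by the terminal `a`. -/
def ShiftL (D : Set (Tr S A P)) (a : A) (L : Set (List S)) : Set (List S) :=
  {σ' | ∃ (s t : S) (σ : List S), Tr.shift s a t ∈ D ∧ σ ∈ L ∧ Step (Tr.shift s a t : Tr S A P) σ σ'}

/-- A language is null-closed if nullable states may be skipped. -/
def NullClosed (D : Set (Tr S A P)) (L : Set (List S)) : Prop :=
  ∀ (σ₁ : List S) (s : S) (σ₂ : List S),
    Nullable D s → σ₁ ++ s :: σ₂ ∈ L → σ₁ ++ σ₂ ∈ L

/-- Null closure: the smallest null-closed language containing `L`. -/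
def NClo (D : Set (Tr S A P)) (L : Set (List S)) : Set (List S) :=
  ⋂₀ {T | L ⊆ T ∧ NullClosed D T}

/-- `Del D τ σ`: the word `σ` is obtained from `τ` by erasing some occurrences of nullable
states. -/
inductive Del (D : Set (Tr S A P)) : List S → List S → Prop where
  | nil : Del D [] []
  | keep (s : S) {τ σ : List S} : Del D τ σ → Del D (s :: τ) (s :: σ)
  | skip {s : S} {τ σ : List S} : Nullable D s → Del D τ σ → Del D (s :: τ) σ

theorem Del.refl (D : Set (Tr S A P)) : ∀ σ : List S, Del D σ σ
  | [] => .nil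
  | s :: σ => .keep s (Del.refl D σ)

theorem Del.erase {D : Set (Tr S A P)} {s : S} (hs : Nullable D s) {τ ρ : List S}
    (h : Del D τ ρ) : ∀ σ₁ σ₂ : List S, ρ = σ₁ ++ s :: σ₂ → Del D τ (σ₁ ++ σ₂) := by
  induction h with
  | nil => intro σ₁ σ₂ h; simp at h
  | keep u h ih =>
    intro σ₁ σ₂ e
    cases σ₁ with
    | nil =>
      obtain ⟨rfl, rfl⟩ := List.cons.inj e
      exact .skip hs h
    | cons v σ₁ =>
      obtain ⟨rfl, e'⟩ := List.cons.inj e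
      exact .keep u (ih σ₁ σ₂ e')
  | skip hu h ih => exact fun σ₁ σ₂ e => .skip hu (ih σ₁ σ₂ e)

theorem exists_del_of_mem_NClo {D : Set (Tr S A P)} {L : Set (List S)} {σ : List S}
    (h : σ ∈ NClo D L) : ∃ τ ∈ L, Del D τ σ := by
  refine h {σ | ∃ τ ∈ L, Del D τ σ} ⟨fun σ hσ => ⟨σ, hσ, Del.refl D σ⟩, ?_⟩
  rintro σ₁ s σ₂ hs ⟨τ, hτ, hd⟩
  exact ⟨τ, hτ, hd.erase hs σ₁ σ₂ rfl⟩

/-- A null-closed language is stable under deletions; the prefix `ρ`, left untouched, is what lets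
the induction pass under a kept state. -/
theorem NullClosed.append_mem_of_del {D : Set (Tr S A P)} {T : Set (List S)}
    (hT : NullClosed D T) {τ σ : List S} (h : Del D τ σ) :
    ∀ ρ : List S, ρ ++ τ ∈ T → ρ ++ σ ∈ T := by
  induction h with
  | nil => exact fun ρ h => h
  | keep s h ih =>
    intro ρ hρ
    simpa using ih (ρ ++ [s]) (by simpa using hρ)
  | skip hs h ih => exact fun ρ hρ => ih ρ (hT _ _ _ hs hρ)

theorem Reach.append {D : Set (Tr S A P)} {η : List (Tr S A P)} {σ σ' : List S}
    (h : Reach D η σ σ') (ρ : List S) : Reach D η (σ ++ ρ) (σ' ++ ρ) := by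
  induction h with
  | nil σ => exact .nil _
  | cons hd hstep _ ih =>
    refine .cons hd ?_ ih
    cases hstep <;> constructor

/-- In a call-reduce-closed language, the nullable states erased in front of the first surviving
state can be consumed without leaving the language. -/
theorem exists_cons_mem_of_del {D : Set (Tr S A P)} {L : Set (List S)} (hL : CRC D L = L)
    {s : S} {σ : List S} : ∀ τ : List S, τ ∈ L → Del D τ (s :: σ) →
      ∃ τ', s :: τ' ∈ L ∧ Del D τ' σ := by
  intro τ
  induction τ with
  | nil => intro _ h; cases h
  | cons u τ ih =>
    intro hτ h
    cases h with
    | keep _ h => exact ⟨τ, hτ, h⟩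
    | skip hu h =>
      obtain ⟨η, hη, hr⟩ := hu
      refine ih ?_ h
      rw [← hL]
      exact ⟨η, u :: τ, hη, hτ, hr.append τ⟩

/-- For every call-reduce-closed language `Σ ⊆ S*` and terminal `a`,
`S_a(N(Σ)) ⊆ N(S_a(Σ))`. -/
theorem shift_nullClosure_subset
    (S A P : Type) (D : Set (Tr S A P)) (a : A) (L : Set (List S))
    (hclosed : CRC D L = L) :
    ShiftL D a (NClo D L) ⊆ NClo D (ShiftL D a L) := by
  rintro _ ⟨s, t, _, hD, hσ, ⟨⟩⟩
  obtain ⟨τ, hτ, hd⟩ := exists_del_of_mem_NClo hσ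
  obtain ⟨τ', hτ', hd'⟩ := exists_cons_mem_of_del hclosed τ hτ hd
  rintro T ⟨hLT, hT⟩
  exact hT.append_mem_of_del hd' [t] (hLT ⟨s, t, s :: τ', hD, hτ', .shift s a t τ'⟩)
end

section
/- For every guided relation Ψ ⊆ G* × D* and every a ∈ A: S_a(N(Ψ)) ⊆ N(S_a(Ψ)). -/
variable {S A P : Type}

/-- Guided configuration symbols: states or (non-shift) guiding transitions. -/
abbrev GSym (S A P : Type) := S ⊕ Tr S A P

/-- `η ∈ D_ε*`, with membership in `D` explicit. -/
def EpsTr (D : Set (Tr S A P)) (η : List (Tr S A P)) : Prop :=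
  ∀ d ∈ η, d ∈ D ∧ ¬ d.isShift

/-- The guided configuration does not begin with a (guiding) transition. -/
def notGuidedHead : List (GSym S A P) → Prop
  | Sum.inr _ :: _ => False
  | _ => True

/-- One-step reachability on guided configurations: the three transition rules act
when the first letter is a state, and a nonempty prefix block of guiding transitions
is executed en bloc (as a single step labelled by the block), provided what follows
does not begin with a transition. -/
inductive GStep (D : Set (Tr S A P)) :
    List (Tr S A P) → List (GSym S A P) → List (GSym S A P) → Prop where
  | shift {s : S} {a : A} {t : S} {γ : List (GSym S A P)} : Tr.shift s a t ∈ D →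
      GStep D [Tr.shift s a t] (Sum.inl s :: γ) (Sum.inl t :: γ)
  | call {s u t : S} {γ : List (GSym S A P)} : Tr.call s u t ∈ D →
      GStep D [Tr.call s u t] (Sum.inl s :: γ) (Sum.inl u :: Sum.inl t :: γ)
  | reduce {s : S} {p : P} {γ : List (GSym S A P)} : Tr.reduce s p ∈ D →
      GStep D [Tr.reduce s p] (Sum.inl s :: γ) γ
  | block {η : List (Tr S A P)} {γ : List (GSym S A P)} :
      η ≠ [] → EpsTr D η → notGuidedHead γ →
      GStep D η (η.map Sum.inr ++ γ) γ

/-- `γ →_δ γ'` on guided configurations: a sequence of guided steps whose labels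
concatenate to `δ`. -/
inductive GReach (D : Set (Tr S A P)) :
    List (Tr S A P) → List (GSym S A P) → List (GSym S A P) → Prop where
  | nil (γ : List (GSym S A P)) : GReach D [] γ γ
  | step {δ₁ δ₂ : List (Tr S A P)} {γ γ' γ'' : List (GSym S A P)} :
      GStep D δ₁ γ γ' → GReach D δ₂ γ' γ'' → GReach D (δ₁ ++ δ₂) γ γ''

/-- Guided relations: subsets of `G* × D*`. -/
abbrev GRel (S A P : Type) := Set (List (GSym S A P) × List (Tr S A P))

/-- A guided relation is null-closed if a state `s` nulling via `η ∈ D_ε*`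
(ordinary semantics) may be replaced by `η` in first components. -/
def GNullClosed (D : Set (Tr S A P)) (Ψ : GRel S A P) : Prop :=
  ∀ (γ₁ : List (GSym S A P)) (s : S) (γ₂ : List (GSym S A P))
    (η ρ : List (Tr S A P)),
    EpsSeq η → Reach D η [s] [] →
    (γ₁ ++ Sum.inl s :: γ₂, ρ) ∈ Ψ → (γ₁ ++ η.map Sum.inr ++ γ₂, ρ) ∈ Ψ

/-- Null closure of a guided relation: the smallest null-closed relation containing it. -/
def GNClo (D : Set (Tr S A P)) (Ψ : GRel S A P) : GRel S A P :=
  ⋂₀ {T | Ψ ⊆ T ∧ GNullClosed D T}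

/-- Call-reduce closure of a guided relation:
`C(Ψ) = {(γ', rev η · rev δ) : γ →_η γ', η ∈ D_ε*, (γ, rev δ) ∈ Ψ}`. -/
def GCRC (D : Set (Tr S A P)) (Ψ : GRel S A P) : GRel S A P :=
  {p | ∃ (γ : List (GSym S A P)) (η ρ : List (Tr S A P)),
    EpsSeq η ∧ (γ, ρ) ∈ Ψ ∧ GReach D η γ p.1 ∧ p.2 = η.reverse ++ ρ}

/-- Shift of a guided relation by the terminal `a`:
`S_a(Ψ) = {(γ', d · rev δ) : γ →_d γ', d ∈ D_a, (γ, rev δ) ∈ Ψ}`. -/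
def GShiftR (D : Set (Tr S A P)) (a : A) (Ψ : GRel S A P) : GRel S A P :=
  {p | ∃ (γ : List (GSym S A P)) (ρ : List (Tr S A P)) (s t : S),
    Tr.shift s a t ∈ D ∧ (γ, ρ) ∈ Ψ ∧
    GStep D [Tr.shift s a t] γ p.1 ∧ p.2 = Tr.shift s a t :: ρ}

theorem subset_GNClo (D : Set (Tr S A P)) (Ψ : GRel S A P) : Ψ ⊆ GNClo D Ψ :=
  fun _ hp _ hT => hT.1 hp

theorem nullClosed_GNClo (D : Set (Tr S A P)) (Ψ : GRel S A P) :
    GNullClosed D (GNClo D Ψ) :=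
  fun γ₁ s γ₂ η ρ hη hs h T hT => hT.2 γ₁ s γ₂ η ρ hη hs (h T hT)

/-- A guiding block is never labelled by a shift, so a step labelled by a shift really shifts the
head state. -/
theorem GStep.shift_inv {D : Set (Tr S A P)} {s t : S} {a : A} {γ γ' : List (GSym S A P)}
    (h : GStep D [Tr.shift s a t] γ γ') :
    ∃ δ, γ = Sum.inl s :: δ ∧ γ' = Sum.inl t :: δ := by
  generalize hl : [Tr.shift s a t] = l at h
  cases h with
  | shift _ =>
    cases hl
    exact ⟨_, rfl, rfl⟩
  | call _ => cases hl
  | reduce _ => cases hl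
  | block _ hη _ =>
    subst hl
    exact absurd trivial (hη _ (List.mem_singleton_self _)).2

/-- The pairs all of whose `a`-shifts lie in `T`. -/
def shiftPreimage (D : Set (Tr S A P)) (a : A) (T : GRel S A P) : GRel S A P :=
  {p | ∀ (s t : S) (δ : List (GSym S A P)), Tr.shift s a t ∈ D → p.1 = Sum.inl s :: δ →
    (Sum.inl t :: δ, Tr.shift s a t :: p.2) ∈ T}

/-- Replacement behind the head commutes with shifting the head; replacement at the head leaves
no shift to consider. -/
theorem GNullClosed.shiftPreimage {D : Set (Tr S A P)} {T : GRel S A P}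
    (hT : GNullClosed D T) (a : A) : GNullClosed D (shiftPreimage D a T) := by
  intro γ₁ s γ₂ η ρ hη hs h s' t δ hd heq
  cases γ₁ with
  | nil =>
    -- The replaced state is the head: the new head is a transition, as `η` is nonempty.
    cases η with
    | nil => cases hs
    | cons d η => simp at heq
  | cons g γ₁ =>
    obtain ⟨rfl, rfl⟩ : g = Sum.inl s' ∧ γ₁ ++ η.map Sum.inr ++ γ₂ = δ := by
      simpa using heq
    exact hT (Sum.inl t :: γ₁) s γ₂ η _ hη hs (h s' t _ hd rfl)

/-- For every guided relation `Ψ ⊆ G* × D*` and terminal `a`: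
`S_a(N(Ψ)) ⊆ N(S_a(Ψ))`. -/
theorem guided_shift_nullClosure_subset
    (S A P : Type) (D : Set (Tr S A P)) (a : A) (Ψ : GRel S A P) :
    GShiftR D a (GNClo D Ψ) ⊆ GNClo D (GShiftR D a Ψ) := by
  rintro ⟨γ', ρ'⟩ ⟨γ, ρ, s, t, hd, hγ, hstep, hρ⟩
  obtain ⟨δ, rfl, hγ'⟩ := hstep.shift_inv
  dsimp only at hγ' hρ
  subst hγ' hρ
  refine hγ (shiftPreimage D a (GNClo D (GShiftR D a Ψ)))
    ⟨?_, (nullClosed_GNClo D _).shiftPreimage a⟩ s t δ hd rfl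
  rintro ⟨γ, ρ⟩ hp s t δ hd rfl
  exact subset_GNClo D _ ⟨_, ρ, s, t, hd, hp, GStep.shift hd, rfl⟩
end

section
/- Derivative decomposition: let Σ ⊆ S* satisfy Σ∖{ε} = ⋃_{j∈J} (Υ_j∖{ε})·Σ_j for a finite index set J and languages Υ_j, Σ_j ⊆ S*. Fix s ∈ S, and for each j ∈ J let 𝒟_j be a derivative (of any degree) of Υ_j by s. Then {σ ∈ S* : s·σ ∈ Σ} ∖ {ε} = ⋃_{j∈J} ⋃_{Υ'∈𝒟_j} (Υ'∖{ε})·Σ_j ∪ ⋃_{j∈J : ε ∈ Υ' for some Υ' ∈ 𝒟_j} (Σ_j∖{ε}). -/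
/-! A nonempty word `s·σ` lies in `Sig` iff it factors as `x·y` with `x ∈ Υ j` nonempty and
`y ∈ Sigs j`. Such an `x` has the form `s·x'`, so that `σ = x'·y`, and the defining property of
the derivative turns `s·x' ∈ Υ j` into membership of `x'` in some `Υ' ∈ 𝒟 j`. Splitting on
whether `x'` is empty gives the two parts of the right-hand side. -/

/-- Element-wise concatenation of languages over `S`. -/
def cat {S : Type} (X Y : Set (List S)) : Set (List S) :=
  {w | ∃ x ∈ X, ∃ y ∈ Y, w = x ++ y}

/-- `𝒟` is a derivative (of some degree) of the language `Υ` by the symbol `s`: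
a finite collection of languages such that `s·σ ∈ Υ ↔ σ ∈ ⋃ 𝒟`. -/
def IsLangDeriv {S : Type} (Υ : Set (List S)) (s : S) (𝒟 : Set (Set (List S))) : Prop :=
  𝒟.Finite ∧ ∀ σ : List S, s :: σ ∈ Υ ↔ ∃ Υ' ∈ 𝒟, σ ∈ Υ'

/-- **Derivative decomposition:** if `Σ∖{ε} = ⋃_j (Υ_j∖{ε})·Σ_j`, then for derivatives
`𝒟_j` of the `Υ_j` by `s`,
`{σ : s·σ ∈ Σ}∖{ε} = ⋃_j ⋃_{Υ'∈𝒟_j} (Υ'∖{ε})·Σ_j  ∪  ⋃_{j : ε ∈ Υ' for some Υ'∈𝒟_j} (Σ_j∖{ε})`. -/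
theorem derivative_decomposition
    (S : Type) [Finite S] (J : Type) [Finite J]
    (Sig : Set (List S)) (Υ Sigs : J → Set (List S)) (s : S)
    (𝒟 : J → Set (Set (List S)))
    (hder : ∀ j, IsLangDeriv (Υ j) s (𝒟 j))
    (hdec : Sig \ {[]} = ⋃ j : J, cat (Υ j \ {[]}) (Sigs j)) :
    {σ : List S | s :: σ ∈ Sig} \ {[]} =
      (⋃ j : J, ⋃ Υ' ∈ 𝒟 j, cat (Υ' \ {[]}) (Sigs j)) ∪
      (⋃ j : J, ⋃ (_ : ∃ Υ' ∈ 𝒟 j, [] ∈ Υ'), Sigs j \ {[]}) := by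
  have key : ∀ σ : List S, s :: σ ∈ Sig ↔
      ∃ j, ∃ x ∈ Υ j \ {[]}, ∃ y ∈ Sigs j, s :: σ = x ++ y := by
    intro σ
    -- `s·σ` is never empty, so removing `ε` from `Sig` does not affect it.
    have h := Set.ext_iff.mp hdec (s :: σ)
    simpa [cat] using h
  ext σ
  simp only [Set.mem_sdiff, Set.mem_ofPred_eq, Set.mem_singleton_iff, Set.mem_union,
    Set.mem_iUnion, key, cat, exists_prop]
  constructor
  · rintro ⟨⟨j, x, ⟨hx, hx0⟩, y, hy, e⟩, hσ⟩
    -- The nonempty factor from `Υ j` must begin with `s`; the two parts of the union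
    -- correspond to its tail being nonempty or empty.
    rcases x with _ | ⟨a, x⟩
    · exact absurd rfl hx0
    · rw [List.cons_append, List.cons.injEq] at e
      obtain ⟨rfl, rfl⟩ := e
      obtain ⟨D, hD, hxD⟩ := ((hder j).2 x).1 hx
      rcases eq_or_ne x [] with rfl | hne
      · exact Or.inr ⟨j, ⟨D, hD, hxD⟩, hy, hσ⟩
      · exact Or.inl ⟨j, D, hD, x, ⟨hxD, hne⟩, y, hy, rfl⟩
  · rintro (⟨j, D, hD, x, ⟨hxD, hne⟩, y, hy, rfl⟩ | ⟨j, ⟨D, hD, hxD⟩, hy, hσ⟩)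
    · exact ⟨⟨j, s :: x, ⟨((hder j).2 x).2 ⟨D, hD, hxD⟩, List.cons_ne_nil _ _⟩, y, hy, rfl⟩,
        fun h => hne (List.append_eq_nil_iff.mp h).1⟩
    · exact ⟨⟨j, [s], ⟨((hder j).2 []).2 ⟨D, hD, hxD⟩, List.cons_ne_nil _ _⟩, σ, hy, rfl⟩, hσ⟩
end

section
/- Derivatives of atomic closures: for all s, t, u ∈ S, σ' ∈ S*, and η ∈ D_ε*, one has s →_η t·u·σ' if and only if there exist t', t'' ∈ S with d = call⟨t',t'',u⟩ ∈ D and η₁, η₂ ∈ D_ε* such that η = η₁·d·η₂, s →_{η₁} t'·σ', and t'' →_{η₂} t. -/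
variable {S A P : Type}

theorem Reach.append_s15 {D : Set (Tr S A P)} {δ₁ δ₂ : List (Tr S A P)} {σ₁ σ₂ σ₃ : List S}
    (h₁ : Reach D δ₁ σ₁ σ₂) (h₂ : Reach D δ₂ σ₂ σ₃) : Reach D (δ₁ ++ δ₂) σ₁ σ₃ := by
  induction h₁ with
  | nil => exact h₂
  | cons hd hs _ ih => exact .cons hd hs (ih h₂)

theorem Step.frame {d : Tr S A P} {σ₁ σ₂ : List S} (h : Step d σ₁ σ₂) (ρ : List S) :
    Step d (σ₁ ++ ρ) (σ₂ ++ ρ) := by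
  cases h <;> constructor

theorem Reach.frame {D : Set (Tr S A P)} {δ : List (Tr S A P)} {σ₁ σ₂ : List S}
    (h : Reach D δ σ₁ σ₂) (ρ : List S) : Reach D δ (σ₁ ++ ρ) (σ₂ ++ ρ) := by
  induction h with
  | nil => exact .nil _
  | cons hd hs _ ih => exact .cons hd (hs.frame ρ) ih

/-- No transition applies to the empty configuration. -/
theorem Reach.eq_nil {D : Set (Tr S A P)} {δ : List (Tr S A P)} {σ : List S}
    (h : Reach D δ [] σ) : σ = [] := by
  cases h with
  | nil => rfl
  | cons _ hs _ => nomatch hs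

/-- A run ending in `t·u·σ'` either stays strictly above an already present suffix `u·σ'`, or
splits at the call that pushes this occurrence of `u`. -/
theorem Reach.above_or_split {D : Set (Tr S A P)} {η : List (Tr S A P)} {ρ : List S}
    {t u : S} {σ' : List S} (h : Reach D η ρ (t :: u :: σ')) :
    (∃ τ, ρ = τ ++ u :: σ' ∧ Reach D η τ [t]) ∨
      ∃ (t' t'' : S) (η₁ η₂ : List (Tr S A P)),
        Tr.call t' t'' u ∈ D ∧ η = η₁ ++ Tr.call t' t'' u :: η₂ ∧
        Reach D η₁ ρ (t' :: σ') ∧ Reach D η₂ [t''] [t] := by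
  generalize hω : t :: u :: σ' = ω at h
  induction h with
  | nil => exact .inl ⟨[t], hω.symm, .nil _⟩
  | @cons d δ ρ₀ ρ₁ _ hd hs _ ih =>
    rcases ih hω with ⟨τ, rfl, hτ⟩ | ⟨t', t'', η₁, η₂, hc, rfl, h₁, h₂⟩
    -- The rest of the run is above `u·σ'`, on a stack `τ` that cannot be empty.
    · obtain _ | ⟨x, τ⟩ := τ
      · exact absurd hτ.eq_nil (List.cons_ne_nil _ _)
      generalize hκ : x :: τ ++ u :: σ' = κ at hs
      cases hs with
      | shift s a y σ =>
        obtain ⟨rfl, rfl⟩ := List.cons.inj hκ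
        exact .inl ⟨s :: τ, rfl, .cons hd (.shift ..) hτ⟩
      | reduce s p =>
        subst hκ
        exact .inl ⟨s :: x :: τ, rfl, .cons hd (.reduce ..) hτ⟩
      | call s v y σ =>
        obtain ⟨rfl, hσ⟩ := List.cons.inj hκ
        obtain _ | ⟨z, τ⟩ := τ
        -- The first transition is itself the call pushing `u`.
        · obtain ⟨rfl, rfl⟩ := List.cons.inj hσ
          exact .inr ⟨s, x, [], δ, hd, rfl, .nil _, hτ⟩
        · obtain ⟨rfl, rfl⟩ := List.cons.inj hσ
          exact .inl ⟨s :: τ, rfl, .cons hd (.call ..) hτ⟩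
    · exact .inr ⟨t', t'', d :: η₁, η₂, hc, rfl, .cons hd hs h₁, h₂⟩

/-- **Derivatives of atomic closures:** for `η ∈ D_ε*`, one has `s →_η t·u·σ'`
iff `η = η₁·call⟨t',t'',u⟩·η₂` with `call⟨t',t'',u⟩ ∈ D`, `s →_{η₁} t'·σ'`
and `t'' →_{η₂} t`, for some `t', t'' ∈ S` and `η₁, η₂ ∈ D_ε*`. -/
theorem atomic_closure_derivative_split
    (S A P : Type) (D : Set (Tr S A P)) (s t u : S) (σ' : List S)
    (η : List (Tr S A P)) (hη : EpsSeq η) :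
    Reach D η [s] (t :: u :: σ') ↔
      ∃ (t' t'' : S) (η₁ η₂ : List (Tr S A P)),
        Tr.call t' t'' u ∈ D ∧
        η = η₁ ++ Tr.call t' t'' u :: η₂ ∧
        EpsSeq η₁ ∧ EpsSeq η₂ ∧
        Reach D η₁ [s] (t' :: σ') ∧ Reach D η₂ [t''] [t] := by
  constructor
  · intro h
    rcases h.above_or_split with ⟨τ, hτ, h'⟩ | ⟨t', t'', η₁, η₂, hc, rfl, h₁, h₂⟩
    -- A stack of height one has no room for a nonempty `τ` above `u·σ'`.
    · obtain _ | ⟨x, τ⟩ := τ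
      · exact absurd h'.eq_nil (List.cons_ne_nil _ _)
      · simp at hτ
    · exact ⟨t', t'', η₁, η₂, hc, rfl, fun d hd => hη d (by simp [hd]),
        fun d hd => hη d (by simp [hd]), h₁, h₂⟩
  · rintro ⟨t', t'', η₁, η₂, hc, rfl, -, -, h₁, h₂⟩
    exact h₁.append_s15 (.cons hc (.call ..) (h₂.frame (u :: σ')))
end
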